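/- Let V : ℝ³ → S² define a line fibration of ℝ³ such that α = V₁dx + V₂dy + V₃dz is a contact form, and suppose every line of the fibration has a distinct parallel line in the fibration. Then after an affine change of coordinates, V(x,y,z) = (cos θ(z), −sin θ(z), 0) for some smooth θ : ℝ → ℝ with θ(0) = 0 and θ'(z) ≠ 0 for all z; consequently ker α is diffeomorphic to the standard contact structure ker(dz + x dy). -/

import Mathlib

open Real

noncomputable section

/-- Points/vectors of `ℝ³`. -/
abbrev E3 : Type := ℝ × ℝ × ℝ

/-- The Euclidean dot product on `ℝ³`. -/
def dot3 (a b : E3) : ℝ := a.1 * b.1 + a.2.1 * b.2.1 + a.2.2 * b.2.2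

def e1 : E3 := (1, 0, 0)
def e2 : E3 := (0, 1, 0)
def e3 : E3 := (0, 0, 1)

/-- The value of the 2-form `dα` at `p` on vectors `u, v`, where
`α = V₁ dx + V₂ dy + V₃ dz`, i.e. `α_p(u) = ⟨V(p), u⟩`. -/
def dAlpha (V : E3 → E3) (p u v : E3) : ℝ :=
  dot3 (fderiv ℝ V p u) v - dot3 (fderiv ℝ V p v) u

/-- The value of the 3-form `α ∧ dα` at `p` on the standard basis of `ℝ³`;
`α ∧ dα ≠ 0` at `p` iff this number is nonzero. -/
def wedge (V : E3 → E3) (p : E3) : ℝ :=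
  dot3 (V p) e1 * dAlpha V p e2 e3
    - dot3 (V p) e2 * dAlpha V p e1 e3
    + dot3 (V p) e3 * dAlpha V p e1 e2

/-- The curl of the vector field `V` at `p`. -/
def curl (V : E3 → E3) (p : E3) : E3 :=
  ((fderiv ℝ V p e2).2.2 - (fderiv ℝ V p e3).2.1,
   (fderiv ℝ V p e3).1 - (fderiv ℝ V p e1).2.2,
   (fderiv ℝ V p e1).2.1 - (fderiv ℝ V p e2).1)

/-- The line through `p` in direction `V p`. -/
def line (V : E3 → E3) (p : E3) : Set E3 := {q | ∃ t : ℝ, q = p + t • V p}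

/-- `V` defines a line fibration of `ℝ³`: it is a unit vector field whose lines
are pairwise equal or disjoint (they automatically cover `ℝ³`). -/
def IsLineFibration (V : E3 → E3) : Prop :=
  (∀ p, dot3 (V p) (V p) = 1) ∧
    ∀ p q, line V p = line V q ∨ line V p ∩ line V q = ∅

/-!
Two lines of the fibration with vanishing mutual moment are coplanar, hence parallel. If `V` varies
to first order in the direction `z` at `b`, the lines through `b + ε • z` are not parallel to the
line through `b`, so their mutual moments with that line, and with any line parallel to it, keep
their sign as `z` moves without meeting the kernel of the derivative. The leading terms of these
moments are linear and quadratic in `z`; that they do not change sign forces the derivative of a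
fibration with parallels to have rank at most one and square zero.

Under the contact condition, if `u` is in the kernel of the derivative at `p`, the derivative at
`p + t • u` applied to `u` solves a linear homogeneous differential equation in `t`, hence vanishes.
So `V` is constant on the plane through `p` parallel to this kernel, which is the same all along it.
Two such planes in different directions would meet at a point where the derivative vanishes, which
the contact condition excludes. So all these planes are parallel; `V` is tangent to them and depends
only on the height, and it rotates by an angle `θ` whose derivative cannot vanish. In the frame
rotating with `θ` the contactomorphism with the standard structure is explicit.
-/

open Filter Topology
open scoped ContDiff

section VectorAlgebra

/-- The cross product on `ℝ³`, for `E3` modelled as iterated pairs. -/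
def cross3 (a b : E3) : E3 :=
  (a.2.1 * b.2.2 - a.2.2 * b.2.1, a.2.2 * b.1 - a.1 * b.2.2, a.1 * b.2.1 - a.2.1 * b.1)

lemma dot3_comm (a b : E3) : dot3 a b = dot3 b a := by
  simp only [dot3]; ring

lemma dot3_add_left (a b c : E3) : dot3 (a + b) c = dot3 a c + dot3 b c := by
  simp only [dot3, Prod.fst_add, Prod.snd_add]; ring

lemma dot3_smul_left (t : ℝ) (a b : E3) : dot3 (t • a) b = t * dot3 a b := by
  simp only [dot3, Prod.smul_fst, Prod.smul_snd, smul_eq_mul]; ring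

@[simp] lemma dot3_neg_left (a b : E3) : dot3 (-a) b = -dot3 a b := by
  simp only [dot3, Prod.fst_neg, Prod.snd_neg]; ring

lemma dot3_add_right (a b c : E3) : dot3 a (b + c) = dot3 a b + dot3 a c := by
  simp only [dot3_comm a, dot3_add_left]

lemma dot3_smul_right (t : ℝ) (a b : E3) : dot3 a (t • b) = t * dot3 a b := by
  simp only [dot3_comm a, dot3_smul_left]

lemma cross3_add_left (a b c : E3) : cross3 (a + b) c = cross3 a c + cross3 b c := by
  ext <;> simp only [cross3, Prod.fst_add, Prod.snd_add] <;> ring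

lemma cross3_smul_left (t : ℝ) (a b : E3) : cross3 (t • a) b = t • cross3 a b := by
  ext <;> simp only [cross3, Prod.smul_fst, Prod.smul_snd, smul_eq_mul] <;> ring

lemma cross3_neg_swap (a b : E3) : -cross3 a b = cross3 b a := by
  ext <;> simp only [cross3, Prod.fst_neg, Prod.snd_neg] <;> ring

@[simp] lemma cross3_neg_left (a b : E3) : cross3 (-a) b = -cross3 a b := by
  ext <;> simp only [cross3, Prod.fst_neg, Prod.snd_neg] <;> ring

lemma cross3_add_right (a b c : E3) : cross3 a (b + c) = cross3 a b + cross3 a c := by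
  simp only [← cross3_neg_swap _ a, cross3_add_left, neg_add]

lemma cross3_smul_right (t : ℝ) (a b : E3) : cross3 a (t • b) = t • cross3 a b := by
  simp only [← cross3_neg_swap _ a, cross3_smul_left, smul_neg]

/-- `dot3` as a continuous bilinear map. -/
def dotL : E3 →L[ℝ] E3 →L[ℝ] ℝ :=
  (LinearMap.mk₂ ℝ dot3 dot3_add_left dot3_smul_left dot3_add_right
    dot3_smul_right).toContinuousBilinearMap

/-- `cross3` as a continuous bilinear map. -/
def crossL : E3 →L[ℝ] E3 →L[ℝ] E3 :=
  (LinearMap.mk₂ ℝ cross3 cross3_add_left cross3_smul_left cross3_add_right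
    cross3_smul_right).toContinuousBilinearMap

@[simp] lemma dotL_apply (a b : E3) : dotL a b = dot3 a b := rfl

@[simp] lemma crossL_apply (a b : E3) : crossL a b = cross3 a b := rfl

@[simp] lemma dot3_zero_left (a : E3) : dot3 0 a = 0 := by simp [dot3]

@[simp] lemma dot3_zero_right (a : E3) : dot3 a 0 = 0 := by simp [dot3]

@[simp] lemma cross3_zero_left (a : E3) : cross3 0 a = 0 := by simp [cross3]

@[simp] lemma cross3_self (a : E3) : cross3 a a = 0 := by
  simpa only [map_neg, neg_eq_self] using cross3_neg_swap a a

@[simp] lemma dot3_self_cross3 (a b : E3) : dot3 a (cross3 a b) = 0 := by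
  simp only [dot3, cross3]; ring

@[simp] lemma dot3_cross3_self (a b : E3) : dot3 b (cross3 a b) = 0 := by
  simp only [dot3, cross3]; ring

lemma dot3_self_nonneg (a : E3) : 0 ≤ dot3 a a :=
  add_nonneg (add_nonneg (mul_self_nonneg _) (mul_self_nonneg _)) (mul_self_nonneg _)

@[simp] lemma dot3_self_eq_zero {a : E3} : dot3 a a = 0 ↔ a = 0 := by
  refine ⟨fun h => ?_, by rintro rfl; simp⟩
  simp only [dot3] at h
  ext <;> simp only [Prod.fst_zero, Prod.snd_zero] <;>
    nlinarith [mul_self_nonneg a.1, mul_self_nonneg a.2.1, mul_self_nonneg a.2.2]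

lemma cross3_cross3 (a b c : E3) : cross3 (cross3 a b) c = dot3 a c • b - dot3 b c • a := by
  ext <;> simp [dot3, cross3] <;> ring

lemma dot3_cross3_cross3 (a b : E3) :
    dot3 (cross3 a b) (cross3 a b) = dot3 a a * dot3 b b - dot3 a b ^ 2 := by
  simp only [dot3, cross3]; ring

lemma dot3_cross3_smul (a b c u : E3) :
    dot3 (cross3 a b) c • u =
      dot3 (cross3 b c) u • a + dot3 (cross3 c a) u • b + dot3 (cross3 a b) u • c := by
  ext <;> simp [dot3, cross3] <;> ring

lemma exists_eq_dot3 (φ : E3 →ₗ[ℝ] ℝ) : ∃ m : E3, ∀ u, φ u = dot3 m u := by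
  refine ⟨(φ e1, φ e2, φ e3), fun u => ?_⟩
  have hu : u = u.1 • e1 + u.2.1 • e2 + u.2.2 • e3 := by
    ext <;> simp [e1, e2, e3]
  conv_lhs => rw [hu]
  simp only [map_add, map_smul, smul_eq_mul, dot3]
  ring

lemma eq_dot3_smul_of_cross3_eq_zero {a b : E3} (ha : dot3 a a = 1) (h : cross3 a b = 0) :
    b = dot3 a b • a := by
  have key := cross3_cross3 a b a
  rwa [h, cross3_zero_left, ha, one_smul, eq_comm, sub_eq_zero, dot3_comm b] at key

lemma eq_zero_of_cross3_eq_zero_of_dot3_eq_zero {a b : E3} (ha : dot3 a a = 1)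
    (hcross : cross3 a b = 0) (hdot : dot3 a b = 0) : b = 0 := by
  rw [eq_dot3_smul_of_cross3_eq_zero ha hcross, hdot, zero_smul]

lemma cross3_eq_zero_trans {a b c : E3} (hb : dot3 b b = 1) (hab : cross3 a b = 0)
    (hbc : cross3 b c = 0) : cross3 a c = 0 := by
  rw [eq_dot3_smul_of_cross3_eq_zero hb hbc, cross3_smul_right, hab, smul_zero]

lemma eq_zero_of_dot3_eq_zero {a b u : E3} (hab : cross3 a b ≠ 0) (ha : dot3 a u = 0)
    (hb : dot3 b u = 0) (hc : dot3 (cross3 a b) u = 0) : u = 0 := by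
  have hcross : cross3 (cross3 a b) u = 0 := by simp [cross3_cross3, ha, hb]
  have hprod : dot3 (cross3 a b) (cross3 a b) * dot3 u u = 0 := by
    simpa [hcross, hc, eq_comm] using dot3_cross3_cross3 (cross3 a b) u
  simpa [hab] using hprod

/-- The frame sends `e₁, e₂, e₃` to `a, n × a, n`. -/
lemma exists_isometry_of_orthonormal {a n : E3} (ha : dot3 a a = 1) (hn : dot3 n n = 1)
    (hna : dot3 n a = 0) :
    ∃ A : E3 ≃ₗ[ℝ] E3, (∀ u v, dot3 (A u) (A v) = dot3 u v) ∧ A e1 = a ∧ A e3 = n := by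
  let L : E3 →ₗ[ℝ] E3 :=
    (LinearMap.toSpanSingleton ℝ E3 a).coprod
      ((LinearMap.toSpanSingleton ℝ E3 (cross3 n a)).coprod (LinearMap.toSpanSingleton ℝ E3 n))
  have hL (u : E3) : L u = u.1 • a + (u.2.1 • cross3 n a + u.2.2 • n) := rfl
  have hcc : dot3 (cross3 n a) (cross3 n a) = 1 := by
    rw [dot3_cross3_cross3, hn, ha, hna]; norm_num
  have hisom (u v : E3) : dot3 (L u) (L v) = dot3 u v := by
    simp only [hL, dot3_add_left, dot3_add_right, dot3_smul_left, dot3_smul_right, ha, hn, hna,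
      hcc, dot3_comm a n, dot3_comm (cross3 n a), dot3_self_cross3, dot3_cross3_self]
    simp only [dot3]; ring
  have hinj : Function.Injective L := by
    refine (injective_iff_map_eq_zero L).mpr fun u hu => ?_
    rw [← dot3_self_eq_zero, ← hisom, hu, dot3_zero_left]
  exact ⟨LinearEquiv.ofInjectiveEndo L hinj, hisom, by simp [hL, e1], by simp [hL, e3]⟩

end VectorAlgebra

section Calculus

variable {E F : Type*} [NormedAddCommGroup E] [NormedSpace ℝ E] [NormedAddCommGroup F]
  [NormedSpace ℝ F]

lemma eventually_forall_ne_of_fderiv_ne_zero {f : E → F} {f' : E →L[ℝ] F} {b : E}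
    (hf : HasFDerivAt f f' b) {K : Set E} (hK : IsCompact K) (hne : ∀ z ∈ K, f' z ≠ 0) :
    ∀ᶠ ε : ℝ in 𝓝[>] 0, ∀ z ∈ K, f (b + ε • z) ≠ f b := by
  have hpt : ∀ z ∈ K, ∀ᶠ x : ℝ × E in 𝓝[>] 0 ×ˢ 𝓝 z, f (b + x.1 • x.2) ≠ f b := by
    intro z hz
    have hfst : Tendsto Prod.fst (𝓝[>] (0 : ℝ) ×ˢ 𝓝 z) (𝓝[>] 0) := tendsto_fst
    have hpos : ∀ᶠ x : ℝ × E in 𝓝[>] 0 ×ˢ 𝓝 z, 0 < x.1 := hfst.eventually self_mem_nhdsWithin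
    have hsmul : Tendsto (fun x : ℝ × E => x.1 • x.2) (𝓝[>] 0 ×ˢ 𝓝 z) (𝓝 0) := by
      simpa using (hfst.mono_right nhdsWithin_le_nhds).smul tendsto_snd
    have hscale : Tendsto (fun x : ℝ × E => x.1⁻¹ • x.1 • x.2) (𝓝[>] 0 ×ˢ 𝓝 z) (𝓝 z) :=
      tendsto_snd.congr' (hpos.mono fun x hx => (inv_smul_smul₀ hx.ne' x.2).symm)
    have hslope := hf.hasFDerivWithinAt (s := Set.univ) |>.lim hsmul (by simp) hscale
    filter_upwards [hslope.eventually_ne (hne z hz)] with x hx heq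
    exact hx (by rw [heq, sub_self, smul_zero])
  simp only [← eventually_iSup, ← hK.prod_nhdsSet_eq_biSup] at hpt
  exact hpt.curry.mono fun _ h => h.self_of_nhdsSet

lemma mul_pos_of_isPreconnected {X : Type*} [TopologicalSpace X] {s : Set X}
    (hs : IsPreconnected s) {f : X → ℝ} (hf : ContinuousOn f s) (hne : ∀ x ∈ s, f x ≠ 0)
    {x y : X} (hx : x ∈ s) (hy : y ∈ s) : 0 < f x * f y := by
  by_contra! hle
  have hzero : (0 : ℝ) ∈ Set.uIcc (f x) (f y) := by
    rw [Set.mem_uIcc]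
    rcases mul_nonpos_iff.mp hle with h | h
    · exact Or.inr h.symm
    · exact Or.inl h
  obtain ⟨z, hz, hfz⟩ := (hs.image f hf).ordConnected.uIcc_subset
    (Set.mem_image_of_mem f hx) (Set.mem_image_of_mem f hy) hzero
  exact hne z hz hfz

lemma eq_zero_of_mul_nonneg_of_segment_subset {U : Set E} (hU : IsOpen U) {G : E → ℝ}
    (hG : ∀ x y, segment ℝ x y ⊆ U → 0 ≤ G x * G y) {x v : E} (hx : x ∈ U) {c : ℝ}
    (hc : ∀ t : ℝ, G (x + t • v) = t * c) : c = 0 := by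
  obtain ⟨r, hr, hball⟩ := Metric.isOpen_iff.mp hU x hx
  have hcont : Tendsto (fun t : ℝ => x + t • v) (𝓝[>] 0) (𝓝 x) := by
    have : Continuous fun t : ℝ => x + t • v := by fun_prop
    simpa using (this.tendsto 0).mono_left nhdsWithin_le_nhds
  have hcont' : Tendsto (fun t : ℝ => x + (-t) • v) (𝓝[>] 0) (𝓝 x) := by
    have : Continuous fun t : ℝ => x + (-t) • v := by fun_prop
    simpa using (this.tendsto 0).mono_left nhdsWithin_le_nhds
  obtain ⟨t, htp, htn, ht⟩ := ((hcont.eventually (Metric.ball_mem_nhds x hr)).and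
    ((hcont'.eventually (Metric.ball_mem_nhds x hr)).and self_mem_nhdsWithin)).exists
  have hsign := hG _ _ (((convex_ball x r).segment_subset htp htn).trans hball)
  rw [hc, hc] at hsign
  have htc : t * c = 0 := by nlinarith [sq_nonneg (t * c)]
  exact (mul_eq_zero.mp htc).resolve_left (ne_of_gt ht)

lemma exists_smulRight_of_ker_le {V W : Type*} [AddCommGroup V] [Module ℝ V] [AddCommGroup W]
    [Module ℝ W] {f : V →ₗ[ℝ] W} {φ : V →ₗ[ℝ] ℝ} (h : LinearMap.ker φ ≤ LinearMap.ker f) :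
    ∃ w, f = φ.smulRight w := by
  by_cases hφ : φ = 0
  · subst hφ
    rw [LinearMap.ker_zero, top_le_iff, LinearMap.ker_eq_top] at h
    exact ⟨0, by simp [h]⟩
  · obtain ⟨z, hz⟩ := LinearMap.surjective hφ 1
    refine ⟨f z, LinearMap.ext fun u => ?_⟩
    have hu : u - φ u • z ∈ LinearMap.ker φ := by simp [hz]
    simpa [sub_eq_zero] using h hu

end Calculus

section MutualMoment

/-- The mutual moment of the lines of `V` through `a` and `x`; it vanishes iff they are
coplanar. -/
def mutualMoment (V : E3 → E3) (a x : E3) : ℝ := dot3 (cross3 (V a) (x - a)) (V x)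

variable {V : E3 → E3} {a b p q : E3}

lemma continuous_mutualMoment (hV : Continuous V) (a : E3) : Continuous (mutualMoment V a) := by
  unfold mutualMoment dot3 cross3; fun_prop

lemma tendsto_slope (hV : DifferentiableAt ℝ V b) (z : E3) :
    Tendsto (fun ε : ℝ => ε⁻¹ • (V (b + ε • z) - V b)) (𝓝[>] 0) (𝓝 (fderiv ℝ V b z)) :=
  (hV.hasFDerivAt.hasLineDerivAt z).tendsto_slope_zero_right

lemma cross3_eq_zero_of_line_eq (h : line V p = line V q) : cross3 (V p) (V q) = 0 := by
  obtain ⟨s, hs⟩ : p ∈ line V q := h ▸ ⟨0, by simp⟩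
  obtain ⟨t, ht⟩ : p + V p ∈ line V q := h ▸ ⟨1, by simp⟩
  have hVp : V p = (t - s) • V q := by linear_combination (norm := module) ht - hs
  rw [hVp, cross3_smul_left, cross3_self, smul_zero]

namespace IsLineFibration

lemma line_eq_of_mem (hV : IsLineFibration V) (h : q ∈ line V p) : line V p = line V q :=
  (hV.2 p q).resolve_right (Set.nonempty_iff_ne_empty.mp ⟨q, h, 0, by simp⟩)

lemma cross3_eq_zero_of_mutualMoment_eq_zero (hV : IsLineFibration V)
    (h : mutualMoment V p q = 0) : cross3 (V p) (V q) = 0 := by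
  by_contra hx
  set x := cross3 (V p) (V q) with hx_def
  have hxx : dot3 x x ≠ 0 := dot3_self_eq_zero.not.mpr hx
  have hxd : dot3 x (q - p) = 0 := by
    rw [hx_def, ← neg_eq_zero, ← h, mutualMoment]
    simp only [dot3, cross3, Prod.fst_sub, Prod.snd_sub]
    ring
  obtain ⟨s, t, hst⟩ : ∃ s t : ℝ, q - p = s • V p + t • V q := by
    have hcramer := dot3_cross3_smul (V p) (V q) x (q - p)
    rw [← hx_def, hxd, zero_smul, add_zero] at hcramer
    refine ⟨(dot3 x x)⁻¹ * dot3 (cross3 (V q) x) (q - p),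
      (dot3 x x)⁻¹ * dot3 (cross3 x (V p)) (q - p), ?_⟩
    rw [mul_smul, mul_smul, ← smul_add, ← hcramer, inv_smul_smul₀ hxx]
  have hmem_p : p + s • V p ∈ line V p := ⟨s, rfl⟩
  have hmem_q : p + s • V p ∈ line V q :=
    ⟨-t, by linear_combination (norm := module) -hst⟩
  exact hx (cross3_eq_zero_of_line_eq
    ((hV.line_eq_of_mem hmem_p).trans (hV.line_eq_of_mem hmem_q).symm))

/-- Along a segment of directions that `V` does not fix to first order at `b`, the nearby lines are
never parallel to the line through `a`, so their mutual moment with it keeps its sign. -/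
lemma eventually_mutualMoment_mul_pos (hV : IsLineFibration V) (hVc : Continuous V)
    (hVd : DifferentiableAt ℝ V b) (hab : cross3 (V a) (V b) = 0) {x y : E3}
    (hne : ∀ z ∈ segment ℝ x y, cross3 (V b) (fderiv ℝ V b z) ≠ 0) :
    ∀ᶠ ε : ℝ in 𝓝[>] 0, 0 < mutualMoment V a (b + ε • x) * mutualMoment V a (b + ε • y) := by
  have hcross : HasFDerivAt (fun z => cross3 (V b) (V z)) ((crossL (V b)).comp (fderiv ℝ V b)) b :=
    (crossL (V b)).hasFDerivAt.comp b hVd.hasFDerivAt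
  have hcompact : IsCompact (segment ℝ x y) := by
    rw [segment_eq_image_lineMap]
    exact isCompact_Icc.image (by fun_prop)
  filter_upwards [eventually_forall_ne_of_fderiv_ne_zero hcross hcompact hne] with ε hε
  refine mul_pos_of_isPreconnected (s := segment ℝ x y)
    (f := fun z => mutualMoment V a (b + ε • z)) (convex_segment x y).isPreconnected
    ?_ (fun z hz hzero => hε z hz ?_) (left_mem_segment ℝ x y) (right_mem_segment ℝ x y)
  · exact ((continuous_mutualMoment hVc a).comp (by fun_prop)).continuousOn
  · have hba : cross3 (V b) (V a) = 0 := by rw [← cross3_neg_swap, hab, neg_zero]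
    rw [cross3_self]
    exact cross3_eq_zero_trans (hV.1 a) hba (hV.cross3_eq_zero_of_mutualMoment_eq_zero hzero)

end IsLineFibration

end MutualMoment

section FirstOrder

variable {V : E3 → E3} {a b p : E3}

namespace IsLineFibration

lemma dot3_fderiv_eq_zero (hV : IsLineFibration V) (hVd : DifferentiableAt ℝ V p) (u : E3) :
    dot3 (V p) (fderiv ℝ V p u) = 0 := by
  have hderiv := dotL.hasFDerivAt_of_bilinear hVd.hasFDerivAt hVd.hasFDerivAt
  have hconst : HasFDerivAt (fun z => dotL (V z) (V z)) (0 : E3 →L[ℝ] ℝ) p := by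
    simpa only [dotL_apply, hV.1] using hasFDerivAt_const (1 : ℝ) p
  have hsum : dot3 (V p) (fderiv ℝ V p u) + dot3 (fderiv ℝ V p u) (V p) = 0 :=
    DFunLike.congr_fun (hderiv.unique hconst) u
  rw [dot3_comm _ (V p)] at hsum
  linarith

lemma cross3_fderiv_ne_zero (hV : IsLineFibration V) (hVd : DifferentiableAt ℝ V p) {u : E3}
    (h : fderiv ℝ V p u ≠ 0) : cross3 (V p) (fderiv ℝ V p u) ≠ 0 := fun hcross =>
  h (eq_zero_of_cross3_eq_zero_of_dot3_eq_zero (hV.1 p) hcross (hV.dot3_fderiv_eq_zero hVd u))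

lemma fderiv_self_apply (hV : IsLineFibration V) (hVd : DifferentiableAt ℝ V p) :
    fderiv ℝ V p (V p) = 0 := by
  have hpar (t : ℝ) : cross3 (V p) (V (p + t • V p)) = 0 :=
    hV.cross3_eq_zero_of_mutualMoment_eq_zero (by simp [mutualMoment, cross3_smul_right])
  have hderiv : HasDerivAt (fun t : ℝ => cross3 (V p) (V (p + t • V p)))
      (cross3 (V p) (fderiv ℝ V p (V p))) 0 :=
    (crossL (V p)).hasFDerivAt.comp_hasDerivAt 0 (hVd.hasFDerivAt.hasLineDerivAt (V p))
  simp only [hpar] at hderiv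
  by_contra hne
  exact hV.cross3_fderiv_ne_zero hVd hne (hderiv.unique (hasDerivAt_const 0 0))

end IsLineFibration

lemma mutualMoment_eq_dot3_sub (hab : cross3 (V a) (V b) = 0) (x : E3) :
    mutualMoment V a x = dot3 (cross3 (V a) (x - a)) (V x - V b) := by
  have hzero : dot3 (cross3 (V a) (x - a)) (V b) = -dot3 (cross3 (V a) (V b)) (x - a) := by
    simp only [dot3, cross3]; ring
  rw [hab, dot3_zero_left, neg_zero] at hzero
  rw [mutualMoment, ← dotL_apply, ← dotL_apply, map_sub, dotL_apply _ (V b), hzero, sub_zero]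

lemma tendsto_dot3_cross3_slope (hV : DifferentiableAt ℝ V b) (z : E3) {w : ℝ → E3} {w₀ : E3}
    (hw : Tendsto w (𝓝[>] 0) (𝓝 w₀)) :
    Tendsto (fun ε : ℝ => dot3 (cross3 (V a) (w ε)) (ε⁻¹ • (V (b + ε • z) - V b))) (𝓝[>] 0)
      (𝓝 (dot3 (cross3 (V a) w₀) (fderiv ℝ V b z))) :=
  (dotL.continuous₂.tendsto _).comp
    ((((crossL (V a)).continuous.tendsto _).comp hw).prodMk_nhds (tendsto_slope hV z))

lemma tendsto_mutualMoment_add_smul (hV : DifferentiableAt ℝ V b) (hab : cross3 (V a) (V b) = 0)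
    (z : E3) :
    Tendsto (fun ε : ℝ => ε⁻¹ * mutualMoment V a (b + ε • z)) (𝓝[>] 0)
      (𝓝 (dot3 (cross3 (V a) (b - a)) (fderiv ℝ V b z))) := by
  have hw : Tendsto (fun ε : ℝ => b + ε • z - a) (𝓝[>] 0) (𝓝 (b - a)) := by
    have hcont : Continuous fun ε : ℝ => b + ε • z - a := by fun_prop
    simpa using (hcont.tendsto 0).mono_left nhdsWithin_le_nhds
  refine (tendsto_dot3_cross3_slope hV z hw).congr fun ε => ?_
  rw [mutualMoment_eq_dot3_sub hab, dot3_smul_right]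

lemma tendsto_mutualMoment_self_add_smul (hV : DifferentiableAt ℝ V b) (z : E3) :
    Tendsto (fun ε : ℝ => ε⁻¹ ^ 2 * mutualMoment V b (b + ε • z)) (𝓝[>] 0)
      (𝓝 (dot3 (cross3 (V b) z) (fderiv ℝ V b z))) := by
  refine (tendsto_dot3_cross3_slope hV z tendsto_const_nhds).congr' ?_
  filter_upwards [self_mem_nhdsWithin] with ε (hε : 0 < ε)
  rw [mutualMoment_eq_dot3_sub (cross3_self _), add_sub_cancel_left, dot3_smul_right,
    cross3_smul_right, dot3_smul_left]
  field_simp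

lemma isOpen_setOf_fderiv_ne_zero (V : E3 → E3) (b : E3) : IsOpen {z | fderiv ℝ V b z ≠ 0} :=
  isOpen_ne_fun (fderiv ℝ V b).continuous continuous_const

namespace IsLineFibration

lemma mul_nonneg_of_tendsto_mutualMoment (hV : IsLineFibration V) (hVd : Differentiable ℝ V)
    (hab : cross3 (V a) (V b) = 0) {x y : E3} (hne : ∀ z ∈ segment ℝ x y, fderiv ℝ V b z ≠ 0)
    {k : ℕ} {l₁ l₂ : ℝ}
    (h₁ : Tendsto (fun ε : ℝ => ε⁻¹ ^ k * mutualMoment V a (b + ε • x)) (𝓝[>] 0) (𝓝 l₁))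
    (h₂ : Tendsto (fun ε : ℝ => ε⁻¹ ^ k * mutualMoment V a (b + ε • y)) (𝓝[>] 0) (𝓝 l₂)) :
    0 ≤ l₁ * l₂ := by
  have hpos := hV.eventually_mutualMoment_mul_pos hVd.continuous (hVd b) hab
    fun z hz => hV.cross3_fderiv_ne_zero (hVd b) (hne z hz)
  refine ge_of_tendsto (h₁.mul h₂) ?_
  filter_upwards [hpos, self_mem_nhdsWithin] with ε hε (hε0 : 0 < ε)
  rw [mul_mul_mul_comm]
  positivity

/-- Otherwise the mutual moment with the line through `a` would change sign to first order. -/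
lemma dot3_cross3_fderiv_eq_zero (hV : IsLineFibration V) (hVd : Differentiable ℝ V)
    (hab : cross3 (V a) (V b) = 0) {z : E3} (hz : fderiv ℝ V b z ≠ 0)
    (hdot : dot3 (cross3 (V a) (b - a)) (fderiv ℝ V b z) = 0) (u : E3) :
    dot3 (cross3 (V a) (b - a)) (fderiv ℝ V b u) = 0 := by
  refine eq_zero_of_mul_nonneg_of_segment_subset (isOpen_setOf_fderiv_ne_zero V b)
    (G := fun z => dot3 (cross3 (V a) (b - a)) (fderiv ℝ V b z)) (v := u)
    (fun x y hxy => ?_) hz fun t => ?_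
  · exact hV.mul_nonneg_of_tendsto_mutualMoment (k := 1) hVd hab hxy
      (by simpa only [pow_one] using tendsto_mutualMoment_add_smul (hVd b) hab x)
      (by simpa only [pow_one] using tendsto_mutualMoment_add_smul (hVd b) hab y)
  · simp only [map_add, map_smul, dot3_add_right, dot3_smul_right, hdot, zero_add]

/-- Otherwise the mutual moment with the line through `p` itself would change sign to second
order. -/
lemma eq_zero_of_dot3_cross3_fderiv_eq_mul (hV : IsLineFibration V) (hVd : Differentiable ℝ V)
    {z v : E3} (hz : fderiv ℝ V p z ≠ 0) {c : ℝ}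
    (hc : ∀ t : ℝ, dot3 (cross3 (V p) (z + t • v)) (fderiv ℝ V p (z + t • v)) = t * c) :
    c = 0 :=
  eq_zero_of_mul_nonneg_of_segment_subset (isOpen_setOf_fderiv_ne_zero V p)
    (G := fun z => dot3 (cross3 (V p) z) (fderiv ℝ V p z))
    (fun x y hxy => hV.mul_nonneg_of_tendsto_mutualMoment hVd (cross3_self _) hxy
      (tendsto_mutualMoment_self_add_smul (hVd p) x)
      (tendsto_mutualMoment_self_add_smul (hVd p) y)) hz hc

end IsLineFibration

end FirstOrder

section RankOne

variable {V : E3 → E3}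

/-- Every line of the fibration defined by `V` is parallel to another line of the fibration. -/
def HasParallels (V : E3 → E3) : Prop :=
  ∀ p, ∃ q, line V q ≠ line V p ∧ (V q = V p ∨ V q = -V p)

namespace IsLineFibration

/-- If `x` is the moment of the line through `p` about a parallel line, then `⟨x, ·⟩` vanishes on
either none or all of the nonzero vectors in the range of the derivative. -/
lemma exists_forall_dot3_fderiv_eq_zero_imp (hV : IsLineFibration V) (hVd : Differentiable ℝ V)
    (hpar : HasParallels V) (p : E3) :
    ∃ c, ∀ u, dot3 c (fderiv ℝ V p u) = 0 → fderiv ℝ V p u = 0 := by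
  obtain ⟨q, hline, hq⟩ := hpar p
  have hqp : cross3 (V q) (V p) = 0 := by
    rcases hq with h | h <;> simp [h]
  have hdot (u : E3) : dot3 (V q) (fderiv ℝ V p u) = 0 := by
    rcases hq with h | h <;> simp [h, hV.dot3_fderiv_eq_zero (hVd p)]
  set x := cross3 (V q) (p - q)
  have hx : x ≠ 0 := fun hx0 => hline <| hV.line_eq_of_mem
    ⟨_, sub_eq_iff_eq_add'.mp (eq_dot3_smul_of_cross3_eq_zero (hV.1 q) hx0)⟩
  by_cases hzero : ∀ u, dot3 x (fderiv ℝ V p u) = 0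
  · have hqx : cross3 (V q) x ≠ 0 := fun h =>
      hx (eq_zero_of_cross3_eq_zero_of_dot3_eq_zero (hV.1 q) h (dot3_self_cross3 _ _))
    exact ⟨cross3 (V q) x, fun u hu => eq_zero_of_dot3_eq_zero hqx (hdot u) (hzero u) hu⟩
  · refine ⟨x, fun u hu => ?_⟩
    contrapose! hzero
    exact hV.dot3_cross3_fderiv_eq_zero hVd hqp hzero hu

lemma exists_fderiv_eq_dot3_smul (hV : IsLineFibration V) (hVd : Differentiable ℝ V)
    (hpar : HasParallels V) (p : E3) : ∃ m r, ∀ u, fderiv ℝ V p u = dot3 m u • r := by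
  obtain ⟨c, hc⟩ := hV.exists_forall_dot3_fderiv_eq_zero_imp hVd hpar p
  obtain ⟨r, hr⟩ := exists_smulRight_of_ker_le (f := (fderiv ℝ V p : E3 →ₗ[ℝ] E3))
    (φ := (dotL c : E3 →ₗ[ℝ] ℝ) ∘ₗ (fderiv ℝ V p : E3 →ₗ[ℝ] E3)) hc
  obtain ⟨m, hm⟩ := exists_eq_dot3 ((dotL c : E3 →ₗ[ℝ] ℝ) ∘ₗ (fderiv ℝ V p : E3 →ₗ[ℝ] E3))
  exact ⟨m, r, fun u => by rw [← hm]; exact LinearMap.congr_fun hr u⟩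

lemma dot3_eq_zero_of_fderiv_eq_dot3_smul (hV : IsLineFibration V) (hVd : Differentiable ℝ V)
    {p m r : E3} (hM : ∀ u, fderiv ℝ V p u = dot3 m u • r) (hvm : dot3 (V p) m = 0) :
    dot3 m r = 0 := by
  by_contra hmr
  have hr : fderiv ℝ V p r ≠ 0 := by
    rw [hM]
    exact smul_ne_zero hmr (by rintro rfl; simp at hmr)
  have htriple : cross3 (V p) (cross3 (V p) m) = -m := by
    rw [← cross3_neg_swap, cross3_cross3, hV.1, dot3_comm m, hvm, one_smul, zero_smul, sub_zero]
  have hsq := hV.eq_zero_of_dot3_cross3_fderiv_eq_mul hVd hr (v := cross3 (V p) m)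
    (c := -dot3 m r ^ 2) fun t => by
      simp only [hM, dot3_add_right, dot3_smul_right, dot3_cross3_self, cross3_add_right,
        cross3_smul_right, htriple, dot3_add_left, dot3_smul_left, dot3_neg_left,
        dot3_comm (cross3 (V p) r)]
      ring
  exact hmr (by simpa using hsq)

lemma exists_orthogonal_fderiv_eq_dot3_smul (hV : IsLineFibration V) (hVd : Differentiable ℝ V)
    (hpar : HasParallels V) (p : E3) :
    ∃ m r, (∀ u, fderiv ℝ V p u = dot3 m u • r) ∧
      dot3 (V p) m = 0 ∧ dot3 (V p) r = 0 ∧ dot3 m r = 0 := by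
  by_cases hzero : ∀ u, fderiv ℝ V p u = 0
  · exact ⟨0, 0, by simp [hzero]⟩
  obtain ⟨m, r, hM⟩ := hV.exists_fderiv_eq_dot3_smul hVd hpar p
  obtain ⟨z, hz⟩ := not_forall.mp hzero
  rw [hM, smul_eq_zero, not_or] at hz
  have hvm : dot3 (V p) m = 0 := by
    have hself := hV.fderiv_self_apply (hVd p)
    rw [hM, smul_eq_zero, dot3_comm] at hself
    exact hself.resolve_right hz.2
  have hvr : dot3 (V p) r = 0 := by
    have hperp := hV.dot3_fderiv_eq_zero (hVd p) z
    rw [hM, dot3_smul_right, mul_eq_zero] at hperp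
    exact hperp.resolve_left hz.1
  exact ⟨m, r, hM, hvm, hvr, hV.dot3_eq_zero_of_fderiv_eq_dot3_smul hVd hM hvm⟩

end IsLineFibration

end RankOne

section NilpotentDerivative

variable {E : Type*} [NormedAddCommGroup E] [NormedSpace ℝ E] {V : E → E} {x : E}

lemma eq_zero_of_hasDerivAt_clm_apply {A : ℝ → E →L[ℝ] E} (hA : Continuous A) {f : ℝ → E}
    (hf : ∀ t, HasDerivAt f (A t (f t)) t) (h₀ : f 0 = 0) {t : ℝ} (ht : 0 ≤ t) : f t = 0 := by
  obtain ⟨K, hK⟩ := isCompact_Icc.exists_bound_of_continuousOn (s := Set.Icc 0 t) hA.continuousOn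
  exact eq_zero_of_abs_deriv_le_mul_abs_self_of_eq_zero_right
    (fun s _ => (hf s).continuousAt.continuousWithinAt) (fun s _ => (hf s).hasDerivWithinAt) h₀
    (fun s hs => (A s).le_of_opNorm_le (hK s (Set.Ico_subset_Icc_self hs)) _) t
    (Set.right_mem_Icc.mpr ht)

lemma hasFDerivAt_fderiv (hV : ContDiff ℝ 2 V) (x : E) :
    HasFDerivAt (fderiv ℝ V) (fderiv ℝ (fderiv ℝ V) x) x :=
  ((hV.fderiv_right (m := 1) one_add_one_eq_two.le).differentiable one_ne_zero x).hasFDerivAt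

lemma fderiv_fderiv_apply_self (hV : ContDiff ℝ 2 V) (hself : ∀ x, fderiv ℝ V x (V x) = 0)
    (hnil : ∀ x u, fderiv ℝ V x (fderiv ℝ V x u) = 0) (u : E) :
    fderiv ℝ (fderiv ℝ V) x u (V x) = 0 := by
  have hderiv := (hasFDerivAt_fderiv hV x).clm_apply
    (hV.differentiable two_ne_zero x).hasFDerivAt
  simp only [hself] at hderiv
  simpa [hnil] using DFunLike.congr_fun (hderiv.unique (hasFDerivAt_const 0 x)) u

lemma fderiv_fderiv_apply_fderiv (hV : ContDiff ℝ 2 V)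
    (hnil : ∀ x u, fderiv ℝ V x (fderiv ℝ V x u) = 0) (u z : E) :
    fderiv ℝ (fderiv ℝ V) x u (fderiv ℝ V x z) =
      -fderiv ℝ V x (fderiv ℝ (fderiv ℝ V) x u z) := by
  have hD := hasFDerivAt_fderiv hV x
  have hderiv := hD.clm_apply (hD.clm_apply (hasFDerivAt_const z x))
  simp only [hnil] at hderiv
  simpa [add_eq_zero_iff_eq_neg'] using
    DFunLike.congr_fun (hderiv.unique (hasFDerivAt_const 0 x)) u

lemma fderiv_fderiv_apply_apply_eq_zero (hV : ContDiff ℝ 2 V)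
    (hself : ∀ x, fderiv ℝ V x (V x) = 0)
    (hnil : ∀ x u, fderiv ℝ V x (fderiv ℝ V x u) = 0) (β : ℝ) (z : E) :
    fderiv ℝ (fderiv ℝ V) x (β • V x + fderiv ℝ V x z) (β • V x + fderiv ℝ V x z) = 0 := by
  have hsymm : IsSymmSndFDerivAt ℝ V x := hV.contDiffAt.isSymmSndFDerivAt (by simp)
  have hV0 (u : E) := fderiv_fderiv_apply_self (x := x) hV hself hnil u
  have hDD (u z : E) := fderiv_fderiv_apply_fderiv (x := x) hV hnil u z
  have hmixed : fderiv ℝ (fderiv ℝ V) x (β • V x + fderiv ℝ V x z) z =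
      -fderiv ℝ V x (fderiv ℝ (fderiv ℝ V) x z z) := by
    rw [hsymm.eq, map_add, map_smul, hV0, smul_zero, zero_add, hDD]
  rw [map_add (fderiv ℝ (fderiv ℝ V) x _), map_smul (fderiv ℝ (fderiv ℝ V) x _), hV0, hDD, hmixed,
    map_neg, hnil, smul_zero, neg_zero, neg_zero, add_zero]

lemma fderiv_fderiv_apply_apply_eq (hV : ContDiff ℝ 2 V) (hself : ∀ x, fderiv ℝ V x (V x) = 0)
    (hnil : ∀ x u, fderiv ℝ V x (fderiv ℝ V x u) = 0) {u y : E}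
    (hu : ∃ (β : ℝ) (z : E), u = β • V x + fderiv ℝ V x z + y) :
    fderiv ℝ (fderiv ℝ V) x u u = fderiv ℝ (fderiv ℝ V) x y ((2 : ℝ) • u - y) := by
  obtain ⟨β, z, hu⟩ := hu
  have hb := fderiv_fderiv_apply_apply_eq_zero (x := x) hV hself hnil β z
  have hsymm : fderiv ℝ (fderiv ℝ V) x y u = fderiv ℝ (fderiv ℝ V) x u y :=
    hV.contDiffAt.isSymmSndFDerivAt (by simp) _ _
  rw [← sub_eq_iff_eq_add.mpr hu] at hb
  simp only [map_sub, sub_apply, map_smul] at hb ⊢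
  rw [hsymm] at hb ⊢
  linear_combination (norm := module) hb

/-- Along `t ↦ p + t • u`, the vector `fderiv ℝ V (p + t • u) u` solves a linear homogeneous
differential equation with zero initial value. -/
lemma apply_add_eq_of_fderiv_apply_eq_zero (hV : ContDiff ℝ 2 V)
    (hself : ∀ x, fderiv ℝ V x (V x) = 0)
    (hnil : ∀ x u, fderiv ℝ V x (fderiv ℝ V x u) = 0) {Y : E → E →L[ℝ] E} (hY : Continuous Y)
    (hdecomp : ∀ x u, ∃ (β : ℝ) (z : E), u = β • V x + fderiv ℝ V x z + Y x (fderiv ℝ V x u))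
    {p u : E} (hu : fderiv ℝ V p u = 0) : V (p + u) = V p := by
  let γ (t : ℝ) : E := p + t • u
  have hγ (t : ℝ) : HasDerivAt γ u t := by
    simpa [γ] using ((hasDerivAt_id t).smul_const u).const_add p
  let f (t : ℝ) : E := fderiv ℝ V (γ t) u
  let y (t : ℝ) : E := Y (γ t) (f t)
  let T (t : ℝ) : E →L[ℝ] E →L[ℝ] E := fderiv ℝ (fderiv ℝ V) (γ t)
  let A (t : ℝ) : E →L[ℝ] E := ((T t).flip ((2 : ℝ) • u - y t)).comp (Y (γ t))
  have hf_deriv (t : ℝ) : HasDerivAt f (T t u u) t := by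
    simpa [f] using
      ((hasFDerivAt_fderiv hV (γ t)).comp_hasDerivAt t (hγ t)).clm_apply (hasDerivAt_const t u)
  have hTA (t : ℝ) : T t u u = A t (f t) :=
    fderiv_fderiv_apply_apply_eq hV hself hnil (hdecomp (γ t) u)
  have hγc : Continuous γ := by fun_prop
  have hD : ContDiff ℝ 1 (fderiv ℝ V) := hV.fderiv_right one_add_one_eq_two.le
  have hf : Continuous f := (hD.continuous.comp hγc).clm_apply continuous_const
  have hy : Continuous y := (hY.comp hγc).clm_apply hf
  have hT : Continuous fun t => (T t).flip :=
    (ContinuousLinearMap.flipₗᵢ ℝ E E E).continuous.comp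
      ((hD.continuous_fderiv one_ne_zero).comp hγc)
  have hA : Continuous A :=
    (hT.clm_apply (continuous_const.sub hy)).clm_comp (hY.comp hγc)
  have hf0 {t : ℝ} (ht : 0 ≤ t) : f t = 0 :=
    eq_zero_of_hasDerivAt_clm_apply hA (fun s => hTA s ▸ hf_deriv s) (by simpa [f, γ] using hu) ht
  have hVγ (t : ℝ) : HasDerivAt (V ∘ γ) (f t) t :=
    (hV.differentiable two_ne_zero _).hasFDerivAt.comp_hasDerivAt t (hγ t)
  simpa [γ] using constant_of_has_deriv_right_zero
    (fun t _ => (hVγ t).continuousAt.continuousWithinAt)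
    (fun t ht => hf0 ht.1 ▸ (hVγ t).hasDerivWithinAt) 1 (Set.right_mem_Icc.mpr zero_le_one)

end NilpotentDerivative

section ConstantKernel

variable {E F : Type*} [NormedAddCommGroup E] [NormedSpace ℝ E] [NormedAddCommGroup F]
  [NormedSpace ℝ F] {V : E → F}

lemma ker_fderiv_le_ker_fderiv_add (hV : Differentiable ℝ V)
    (hconst : ∀ p u, fderiv ℝ V p u = 0 → V (p + u) = V p) {p u : E}
    (hu : u ∈ (fderiv ℝ V p).ker) : (fderiv ℝ V p).ker ≤ (fderiv ℝ V (p + u)).ker := by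
  intro w hw
  have hline : HasDerivAt (fun t : ℝ => V (p + u + t • w)) (fderiv ℝ V (p + u) w) 0 :=
    (hV _).hasFDerivAt.hasLineDerivAt w
  have hVw (t : ℝ) : V (p + u + t • w) = V p := by
    rw [add_assoc]
    exact hconst p _ (add_mem hu (Submodule.smul_mem _ t hw))
  simp only [hVw] at hline
  exact hline.unique (hasDerivAt_const 0 (V p))

lemma ker_fderiv_eq_of_isCoatom (hV : Differentiable ℝ V)
    (hconst : ∀ p u, fderiv ℝ V p u = 0 → V (p + u) = V p)
    (hcoatom : ∀ p, IsCoatom (fderiv ℝ V p).ker) (p q : E) :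
    (fderiv ℝ V p).ker = (fderiv ℝ V q).ker := by
  by_contra hne
  have hsup := (hcoatom p).sup_eq_top_of_ne (hcoatom q) hne
  obtain ⟨a, ha, b, hb, hab⟩ :=
    Submodule.mem_sup.mp (hsup ▸ Submodule.mem_top : q - p ∈ (fderiv ℝ V p).ker ⊔ _)
  have hmeet : p + a = q + -b := by linear_combination (norm := module) hab
  refine (hcoatom (p + a)).ne_top (top_le_iff.mp (hsup ▸ sup_le ?_ ?_))
  · exact ker_fderiv_le_ker_fderiv_add hV hconst ha
  · exact hmeet ▸ ker_fderiv_le_ker_fderiv_add hV hconst (neg_mem hb)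

end ConstantKernel

section Contact

variable {V : E3 → E3} {p : E3}

lemma continuous_wedge (hV : ContDiff ℝ 1 V) : Continuous (wedge V) := by
  have hVc := hV.continuous
  have hD (u : E3) : Continuous fun p => fderiv ℝ V p u :=
    (hV.continuous_fderiv one_ne_zero).clm_apply continuous_const
  unfold wedge dAlpha dot3
  fun_prop

lemma wedge_eq_zero_of_fderiv_eq_zero (h : fderiv ℝ V p = 0) : wedge V p = 0 := by
  simp [wedge, dAlpha, h]

lemma wedge_eq_dot3_cross3 {m r : E3} (hM : ∀ u, fderiv ℝ V p u = dot3 m u • r) :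
    wedge V p = dot3 (V p) (cross3 m r) := by
  simp [wedge, dAlpha, hM, dot3, cross3, e1, e2, e3]
  ring

lemma dot3_smul_comm_of_cross3_eq_zero {a b : E3} (h : cross3 a b = 0) (u : E3) :
    dot3 a u • b = dot3 b u • a := by
  rw [← sub_eq_zero, ← cross3_cross3, h, cross3_zero_left]

/-- Away from the zeros of `wedge V`, this recovers `u` modulo `V p` from its image under the
derivative, up to the range of the derivative. -/
lemma IsLineFibration.wedge_smul_sub (hV : IsLineFibration V) (hVd : Differentiable ℝ V)
    (hpar : HasParallels V) (p u : E3) :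
    wedge V p • (u - dot3 (V p) u • V p) =
      -(fderiv ℝ V p (cross3 (V p) u) + cross3 (V p) (fderiv ℝ V p u)) := by
  obtain ⟨m, r, hM, hvm, hvr, hmr⟩ := hV.exists_orthogonal_fderiv_eq_dot3_smul hVd hpar p
  have hmrv : cross3 m (cross3 r (V p)) = 0 := by
    rw [← cross3_neg_swap, cross3_cross3, dot3_comm r, hmr, hvm,
      zero_smul, zero_smul, sub_zero, neg_zero]
  have hvmr : cross3 (V p) (cross3 m r) = 0 := by
    rw [← cross3_neg_swap, cross3_cross3, dot3_comm m, hvm, dot3_comm r, hvr,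
      zero_smul, zero_smul, sub_zero, neg_zero]
  have hcramer := dot3_cross3_smul (V p) m r u
  have hw : dot3 (cross3 (V p) m) r = wedge V p := by
    rw [wedge_eq_dot3_cross3 hM]; simp only [dot3, cross3]; ring
  have hv : dot3 (cross3 m r) u = wedge V p * dot3 (V p) u := by
    rw [eq_dot3_smul_of_cross3_eq_zero (hV.1 p) hvmr, dot3_smul_left, wedge_eq_dot3_cross3 hM]
  have hu : dot3 (cross3 (V p) m) u = -dot3 m (cross3 (V p) u) := by
    simp only [dot3, cross3]; ring
  rw [hw, hv, hu, ← dot3_smul_comm_of_cross3_eq_zero hmrv u, ← cross3_neg_swap (V p)] at hcramer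
  rw [hM, hM, cross3_smul_right]
  linear_combination (norm := module) hcramer

namespace IsLineFibration

lemma fderiv_fderiv_eq_zero (hV : IsLineFibration V) (hVd : Differentiable ℝ V)
    (hpar : HasParallels V) (p u : E3) : fderiv ℝ V p (fderiv ℝ V p u) = 0 := by
  obtain ⟨m, r, hM, -, -, hmr⟩ := hV.exists_orthogonal_fderiv_eq_dot3_smul hVd hpar p
  rw [hM, hM, dot3_smul_right, hmr, mul_zero, zero_smul]

lemma apply_add_eq_of_fderiv_eq_zero (hV : IsLineFibration V) (hVc : ContDiff ℝ 2 V)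
    (hcontact : ∀ p, wedge V p ≠ 0) (hpar : HasParallels V) {p u : E3}
    (hu : fderiv ℝ V p u = 0) : V (p + u) = V p := by
  have hVd : Differentiable ℝ V := hVc.differentiable two_ne_zero
  refine apply_add_eq_of_fderiv_apply_eq_zero (Y := fun x => -(wedge V x)⁻¹ • crossL (V x)) hVc
    (fun x => hV.fderiv_self_apply (hVd x)) (hV.fderiv_fderiv_eq_zero hVd hpar) ?_
    (fun x u => ⟨dot3 (V x) u, -(wedge V x)⁻¹ • cross3 (V x) u, ?_⟩) hu
  · exact ((continuous_wedge (hVc.of_le one_le_two)).inv₀ hcontact).neg.smul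
      (crossL.continuous.comp hVc.continuous)
  · have hsub := hV.wedge_smul_sub hVd hpar x u
    rw [← eq_inv_smul_iff₀ (hcontact x)] at hsub
    rw [map_smul, smul_apply, crossL_apply]
    linear_combination (norm := module) hsub

lemma exists_ker_fderiv_eq_ker_dotL (hV : IsLineFibration V) (hVd : Differentiable ℝ V)
    (hpar : HasParallels V) (hcontact : wedge V p ≠ 0) :
    ∃ m ≠ 0, (fderiv ℝ V p).ker = (dotL m).ker := by
  obtain ⟨m, r, hM⟩ := hV.exists_fderiv_eq_dot3_smul hVd hpar p
  have hne : fderiv ℝ V p ≠ 0 := mt wedge_eq_zero_of_fderiv_eq_zero hcontact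
  have hr : r ≠ 0 := by
    rintro rfl
    exact hne (ContinuousLinearMap.ext fun u => by simp [hM])
  have hm : m ≠ 0 := by
    rintro rfl
    exact hne (ContinuousLinearMap.ext fun u => by simp [hM])
  exact ⟨m, hm, by ext u; simp [hM, hr]⟩

lemma exists_normal (hV : IsLineFibration V) (hVc : ContDiff ℝ 2 V)
    (hcontact : ∀ p, wedge V p ≠ 0) (hpar : HasParallels V) :
    ∃ n, dot3 n n = 1 ∧ ∀ p u, fderiv ℝ V p u = 0 ↔ dot3 n u = 0 := by
  have hVd : Differentiable ℝ V := hVc.differentiable two_ne_zero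
  have hcoatom (p : E3) : IsCoatom (fderiv ℝ V p).ker := by
    obtain ⟨m, hm, hker⟩ := hV.exists_ker_fderiv_eq_ker_dotL hVd hpar (hcontact p)
    rw [hker]
    refine LinearMap.isCoatom_ker_of_surjective (LinearMap.surjective fun h => hm ?_)
    exact dot3_self_eq_zero.mp (LinearMap.congr_fun h m)
  obtain ⟨m, hm, hker⟩ := hV.exists_ker_fderiv_eq_ker_dotL hVd hpar (hcontact 0)
  have hmm : 0 < dot3 m m := (dot3_self_nonneg m).lt_of_ne' (dot3_self_eq_zero.not.mpr hm)
  refine ⟨(√(dot3 m m))⁻¹ • m, ?_, fun p u => ?_⟩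
  · rw [dot3_smul_left, dot3_smul_right, ← mul_assoc, ← mul_inv, Real.mul_self_sqrt hmm.le,
      inv_mul_cancel₀ hmm.ne']
  · have hp := ker_fderiv_eq_of_isCoatom hVd
      (fun p u => hV.apply_add_eq_of_fderiv_eq_zero hVc hcontact hpar) hcoatom p 0
    have hiff : fderiv ℝ V p u = 0 ↔ dot3 m u = 0 := SetLike.ext_iff.mp (hp.trans hker) u
    rw [hiff, dot3_smul_left, mul_eq_zero_iff_left (inv_ne_zero (Real.sqrt_pos.mpr hmm).ne')]

end IsLineFibration

end Contact

section AngleLift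

lemma exists_contDiff_eq_exp {f : ℝ → ℂ} (hf : ContDiff ℝ ∞ f) (hne : ∀ z, f z ≠ 0)
    (h₀ : f 0 = 1) : ∃ F : ℝ → ℂ, ContDiff ℝ ∞ F ∧ F 0 = 0 ∧ ∀ z, f z = Complex.exp (F z) := by
  obtain ⟨hf_diff, hf'⟩ := contDiff_infty_iff_deriv.mp hf
  have hlog : ContDiff ℝ ∞ fun z => deriv f z / f z := by
    simp only [div_eq_mul_inv]
    exact hf'.mul (hf.inv hne)
  let F (z : ℝ) : ℂ := ∫ t in (0 : ℝ)..z, deriv f t / f t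
  have hF (z : ℝ) : HasDerivAt F (deriv f z / f z) z :=
    (hlog.continuous.integral_hasStrictDerivAt 0 z).hasDerivAt
  have hF₀ : F 0 = 0 := intervalIntegral.integral_same
  have hquot (z : ℝ) : HasDerivAt (fun z => f z * Complex.exp (-F z)) 0 z := by
    refine ((hf_diff z).hasDerivAt.mul (hF z).neg.cexp).congr_deriv ?_
    field_simp [hne z]
    ring
  refine ⟨F, contDiff_infty_iff_deriv.mpr ⟨fun z => (hF z).differentiableAt, ?_⟩, hF₀, fun z => ?_⟩
  · rwa [funext fun z => (hF z).deriv]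
  · have hconst := is_const_of_deriv_eq_zero (fun z => (hquot z).differentiableAt)
      (fun z => (hquot z).deriv) z 0
    rwa [hF₀, h₀, neg_zero, Complex.exp_zero, mul_one, Complex.exp_neg,
      mul_inv_eq_one₀ (Complex.exp_ne_zero _)] at hconst

lemma exists_contDiff_eq_cos_sin {c s : ℝ → ℝ} (hc : ContDiff ℝ ∞ c) (hs : ContDiff ℝ ∞ s)
    (hcs : ∀ z, c z ^ 2 + s z ^ 2 = 1) (hc₀ : c 0 = 1) :
    ∃ θ : ℝ → ℝ, ContDiff ℝ ∞ θ ∧ θ 0 = 0 ∧ ∀ z, c z = cos (θ z) ∧ s z = sin (θ z) := by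
  let f (z : ℝ) : ℂ := ⟨c z, s z⟩
  have hf : ContDiff ℝ ∞ f := Complex.equivRealProdCLM.symm.contDiff.comp (hc.prodMk hs)
  have hnorm (z : ℝ) : ‖f z‖ = 1 := by
    rw [← sq_eq_sq₀ (norm_nonneg _) zero_le_one, Complex.sq_norm, Complex.normSq_apply, one_pow,
      ← hcs z, sq, sq]
  have hs₀ : s 0 = 0 := by simpa [hc₀] using hcs 0
  obtain ⟨F, hF, hF₀, hexp⟩ := exists_contDiff_eq_exp hf
    (fun z => norm_ne_zero_iff.mp (by rw [hnorm]; exact one_ne_zero))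
    (Complex.ext hc₀ hs₀)
  have hre (z : ℝ) : (F z).re = 0 := by
    rw [← Real.exp_eq_one_iff, ← Complex.norm_exp, ← hexp, hnorm]
  refine ⟨fun z => (F z).im, Complex.imCLM.contDiff.comp hF, by simp [hF₀], fun z => ⟨?_, ?_⟩⟩
  · simpa [Complex.exp_re, hre] using congrArg Complex.re (hexp z)
  · simpa [Complex.exp_im, hre] using congrArg Complex.im (hexp z)

end AngleLift

section NormalForm

variable {V : E3 → E3} {A : E3 ≃ₗ[ℝ] E3} {θ : ℝ → ℝ}

namespace IsLineFibration

lemma exists_adapted_frame (hV : IsLineFibration V) (hVc : ContDiff ℝ 2 V)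
    (hcontact : ∀ p, wedge V p ≠ 0) (hpar : HasParallels V) :
    ∃ A : E3 ≃ₗ[ℝ] E3, (∀ u v, dot3 (A u) (A v) = dot3 u v) ∧ A e1 = V 0 ∧
      (∀ p, dot3 (A e3) (V p) = 0) ∧ ∀ p, V (A p) = V (A (p.2.2 • e3)) := by
  obtain ⟨n, hnn, hn⟩ := hV.exists_normal hVc hcontact hpar
  have hnV (p : E3) : dot3 n (V p) = 0 :=
    (hn p _).mp (hV.fderiv_self_apply (hVc.differentiable two_ne_zero p))
  obtain ⟨A, hA, hA1, rfl⟩ := exists_isometry_of_orthonormal (hV.1 0) hnn (hnV 0)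
  refine ⟨A, hA, hA1, hnV, fun p => ?_⟩
  have hp : p = p.2.2 • e3 + (p - p.2.2 • e3) := by abel
  conv_lhs => rw [hp, map_add]
  refine hV.apply_add_eq_of_fderiv_eq_zero hVc hcontact hpar ((hn _ _).mpr ?_)
  rw [hA]
  simp [dot3, e3]

lemma exists_isometry_apply_eq_cos_sin (hV : IsLineFibration V) (hVc : ContDiff ℝ ∞ V)
    (hcontact : ∀ p, wedge V p ≠ 0) (hpar : HasParallels V) :
    ∃ (A : E3 ≃ₗ[ℝ] E3) (θ : ℝ → ℝ), ContDiff ℝ ∞ θ ∧ θ 0 = 0 ∧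
      (∀ u v, dot3 (A u) (A v) = dot3 u v) ∧
      ∀ p, V (A p) = A (cos (θ p.2.2), -sin (θ p.2.2), 0) := by
  obtain ⟨A, hA, hA1, hA3, hVA⟩ :=
    hV.exists_adapted_frame (mod_cast contDiff_infty.mp hVc 2) hcontact hpar
  let W (z : ℝ) : E3 := A.symm (V (A (z • e3)))
  have hAW (z : ℝ) : A (W z) = V (A (z • e3)) := A.apply_symm_apply _
  have hW : ContDiff ℝ ∞ W :=
    A.symm.toContinuousLinearEquiv.contDiff.comp
      (hVc.comp (A.toContinuousLinearEquiv.contDiff.comp (by fun_prop)))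
  have hW3 (z : ℝ) : (W z).2.2 = 0 := by
    have hperp := hA3 (A (z • e3))
    rw [← hAW, hA] at hperp
    simpa [dot3, e3] using hperp
  have hWW (z : ℝ) : (W z).1 ^ 2 + (-(W z).2.1) ^ 2 = 1 := by
    have hunit := hV.1 (A (z • e3))
    rw [← hAW, hA, dot3, hW3] at hunit
    linear_combination hunit
  have hW0 : (W 0).1 = 1 := by simp [W, ← hA1, e1]
  obtain ⟨θ, hθ, hθ0, hcs⟩ := exists_contDiff_eq_cos_sin hW.fst hW.snd.fst.neg hWW hW0
  refine ⟨A, θ, hθ, hθ0, hA, fun p => ?_⟩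
  rw [hVA, ← hAW, ← (hcs _).1, ← (hcs _).2, neg_neg, ← hW3 p.2.2]

end IsLineFibration

lemma fderiv_eq_zero_of_deriv_eq_zero (hθ : Differentiable ℝ θ)
    (hVA : ∀ p, V (A p) = A (cos (θ p.2.2), -sin (θ p.2.2), 0)) {z : ℝ} (hz : deriv θ z = 0) :
    fderiv ℝ V (A (z • e3)) = 0 := by
  let B : E3 ≃L[ℝ] E3 := A.toContinuousLinearEquiv
  have hθz : HasFDerivAt (fun p : E3 => θ p.2.2) (0 : E3 →L[ℝ] ℝ) (z • e3) := by
    have hz3 : (z • e3).2.2 = z := by simp [e3]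
    have hderiv := (hθ (z • e3).2.2).hasDerivAt.comp_hasFDerivAt (z • e3)
      (hasFDerivAt_snd (𝕜 := ℝ) (E := ℝ) (F := ℝ × ℝ)).snd
    rwa [hz3, hz, zero_smul] at hderiv
  have hW : HasFDerivAt (fun p : E3 => ((cos (θ p.2.2), -sin (θ p.2.2), 0) : E3))
      (0 : E3 →L[ℝ] E3) (z • e3) := by
    refine (hθz.cos.prodMk (hθz.sin.neg.prodMk (hasFDerivAt_const (0 : ℝ) _))).congr_fderiv ?_
    ext <;> simp
  have hV : V = fun p => B ((fun p : E3 => (cos (θ p.2.2), -sin (θ p.2.2), 0)) (B.symm p)) :=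
    funext fun p => by simpa [B] using hVA (A.symm p)
  have hBz : B.symm (A (z • e3)) = z • e3 := A.symm_apply_apply _
  rw [← hBz] at hW
  rw [hV]
  refine (B.hasFDerivAt.comp _ (hW.comp _ B.symm.hasFDerivAt)).fderiv.trans ?_
  simp

end NormalForm

section Contactomorphism

variable {E : Type*} [NormedAddCommGroup E] [NormedSpace ℝ E]

/-- In the moving frame `(cos φ, -sin φ)`, `(sin φ, cos φ)` of the plane, the components of the
derivative of a curve are those of the covariant derivative. -/
lemma cos_mul_fderiv_sub_sin_mul_fderiv {t w φ : E → ℝ} {p : E} (ht : DifferentiableAt ℝ t p)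
    (hw : DifferentiableAt ℝ w p) (hφ : DifferentiableAt ℝ φ p) (u : E) :
    cos (φ p) * fderiv ℝ (fun x => t x * cos (φ x) + w x * sin (φ x)) p u -
      sin (φ p) * fderiv ℝ (fun x => w x * cos (φ x) - t x * sin (φ x)) p u =
      fderiv ℝ t p u + w p * fderiv ℝ φ p u := by
  have hcos := hφ.hasFDerivAt.cos
  have hsin := hφ.hasFDerivAt.sin
  rw [((ht.hasFDerivAt.fun_mul hcos).fun_add (hw.hasFDerivAt.fun_mul hsin)).fderiv,
    ((hw.hasFDerivAt.fun_mul hcos).fun_sub (ht.hasFDerivAt.fun_mul hsin)).fderiv]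
  simp
  linear_combination (fderiv ℝ t p u + w p * fderiv ℝ φ p u) * sin_sq_add_cos_sq (φ p)

/-- The change of coordinates under which `cos θ(z) dx - sin θ(z) dy` becomes `dz + x dy`: the new
`y` is the height, the new `z` and `x / θ'(y)` are the components of the horizontal part in the
frame rotating with `θ`. -/
def helixEquiv (θ : ℝ → ℝ) (hθ : ∀ z, deriv θ z ≠ 0) : E3 ≃ E3 where
  toFun p := (p.2.2 * cos (θ p.2.1) + p.1 / deriv θ p.2.1 * sin (θ p.2.1),
    p.1 / deriv θ p.2.1 * cos (θ p.2.1) - p.2.2 * sin (θ p.2.1), p.2.1)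
  invFun q := ((q.1 * sin (θ q.2.2) + q.2.1 * cos (θ q.2.2)) * deriv θ q.2.2, q.2.2,
    q.1 * cos (θ q.2.2) - q.2.1 * sin (θ q.2.2))
  left_inv p := by
    have hθp := hθ p.2.1
    have h := sin_sq_add_cos_sq (θ p.2.1)
    ext <;> simp only
    · field_simp; linear_combination p.1 * h
    · linear_combination p.2.2 * h
  right_inv q := by
    have hθq := hθ q.2.2
    have h := sin_sq_add_cos_sq (θ q.2.2)
    ext <;> simp only
    · field_simp; linear_combination q.1 * h
    · field_simp; linear_combination q.2.1 * h

variable {θ : ℝ → ℝ}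

lemma contDiff_fst_div_deriv (hθ : ContDiff ℝ ∞ θ) (hθ' : ∀ z, deriv θ z ≠ 0) :
    ContDiff ℝ ∞ fun p : E3 => p.1 / deriv θ p.2.1 :=
  contDiff_fst.div ((contDiff_infty_iff_deriv.mp hθ).2.comp (by fun_prop)) fun _ => hθ' _

lemma contDiff_helixEquiv (hθ : ContDiff ℝ ∞ θ) (hθ' : ∀ z, deriv θ z ≠ 0) :
    ContDiff ℝ ∞ (helixEquiv θ hθ') := by
  have hdiv := contDiff_fst_div_deriv hθ hθ'
  change ContDiff ℝ ∞ fun p : E3 => ((_, _, _) : E3)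
  fun_prop

lemma contDiff_helixEquiv_symm (hθ : ContDiff ℝ ∞ θ) (hθ' : ∀ z, deriv θ z ≠ 0) :
    ContDiff ℝ ∞ (helixEquiv θ hθ').symm := by
  have hderiv : ContDiff ℝ ∞ (deriv θ) := (contDiff_infty_iff_deriv.mp hθ).2
  change ContDiff ℝ ∞ fun q : E3 => ((_, _, _) : E3)
  fun_prop

lemma dot3_fderiv_helixEquiv (hθ : ContDiff ℝ ∞ θ) (hθ' : ∀ z, deriv θ z ≠ 0) (p u : E3) :
    dot3 (cos (θ p.2.1), -sin (θ p.2.1), 0) (fderiv ℝ (helixEquiv θ hθ') p u) =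
      u.2.2 + p.1 * u.2.1 := by
  have hψ : DifferentiableAt ℝ (helixEquiv θ hθ') p :=
    (contDiff_helixEquiv hθ hθ').differentiable (by simp) p
  have hw : DifferentiableAt ℝ (fun q : E3 => q.1 / deriv θ q.2.1) p :=
    (contDiff_fst_div_deriv hθ hθ').differentiable (by simp) p
  have hφ : HasFDerivAt (fun q : E3 => θ q.2.1) _ p :=
    (hθ.differentiable (by simp) p.2.1).hasDerivAt.comp_hasFDerivAt p
      (hasFDerivAt_snd (𝕜 := ℝ) (E := ℝ) (F := ℝ × ℝ)).fst
  have hφu : fderiv ℝ (fun q : E3 => θ q.2.1) p u = deriv θ p.2.1 * u.2.1 := by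
    rw [hφ.fderiv]; rfl
  have hz : HasFDerivAt (fun q : E3 => q.2.2) _ p :=
    (hasFDerivAt_snd (𝕜 := ℝ) (E := ℝ) (F := ℝ × ℝ)).snd
  have hzu : fderiv ℝ (fun q : E3 => q.2.2) p u = u.2.2 := by
    rw [hz.fderiv]; rfl
  have hfst : (fderiv ℝ (helixEquiv θ hθ') p u).1 =
      fderiv ℝ (fun q => (helixEquiv θ hθ' q).1) p u := by
    rw [fderiv.fst hψ]; rfl
  have hsnd : (fderiv ℝ (helixEquiv θ hθ') p u).2.1 =
      fderiv ℝ (fun q => (helixEquiv θ hθ' q).2.1) p u := by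
    rw [fderiv.fst hψ.snd, fderiv.snd hψ]; rfl
  calc dot3 (cos (θ p.2.1), -sin (θ p.2.1), 0) (fderiv ℝ (helixEquiv θ hθ') p u)
    _ = cos (θ p.2.1) * fderiv ℝ (fun q => (helixEquiv θ hθ' q).1) p u -
        sin (θ p.2.1) * fderiv ℝ (fun q => (helixEquiv θ hθ' q).2.1) p u := by
      rw [dot3, hfst, hsnd]; ring
    _ = fderiv ℝ (fun q : E3 => q.2.2) p u +
        p.1 / deriv θ p.2.1 * fderiv ℝ (fun q : E3 => θ q.2.1) p u :=
      cos_mul_fderiv_sub_sin_mul_fderiv hz.differentiableAt hw hφ.differentiableAt u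
    _ = u.2.2 + p.1 * u.2.1 := by
      rw [hzu, hφu, ← mul_assoc, div_mul_cancel₀ _ (hθ' _)]

lemma exists_contactomorphism {V : E3 → E3} {A : E3 ≃ₗ[ℝ] E3} (hθ : ContDiff ℝ ∞ θ)
    (hθ' : ∀ z, deriv θ z ≠ 0) (hA : ∀ u v, dot3 (A u) (A v) = dot3 u v)
    (hVA : ∀ p, V (A p) = A (cos (θ p.2.2), -sin (θ p.2.2), 0)) :
    ∃ Φ : E3 ≃ₜ E3, ContDiff ℝ ∞ Φ ∧ ContDiff ℝ ∞ Φ.symm ∧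
      ∀ p u, dot3 (V (Φ p)) (fderiv ℝ Φ p u) = u.2.2 + p.1 * u.2.1 := by
  let B : E3 ≃L[ℝ] E3 := A.toContinuousLinearEquiv
  have hψ := contDiff_helixEquiv hθ hθ'
  have hψ_symm := contDiff_helixEquiv_symm hθ hθ'
  let Φ : E3 ≃ₜ E3 :=
    { toEquiv := (helixEquiv θ hθ').trans A.toEquiv
      continuous_toFun := B.continuous.comp hψ.continuous
      continuous_invFun := hψ_symm.continuous.comp B.symm.continuous }
  refine ⟨Φ, B.contDiff.comp hψ, hψ_symm.comp B.symm.contDiff, fun p u => ?_⟩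
  have hΦ : fderiv ℝ Φ p u = A (fderiv ℝ (helixEquiv θ hθ') p u) :=
    DFunLike.congr_fun (B.comp_fderiv (f := helixEquiv θ hθ')) u
  have hVΦ : V (Φ p) = A (cos (θ p.2.1), -sin (θ p.2.1), 0) := hVA _
  rw [hΦ, hVΦ, hA, dot3_fderiv_helixEquiv hθ hθ']

end Contactomorphism

/-- If a line fibration induces a contact structure and every line has a distinct
parallel line in the fibration, then after an affine (rigid) change of coordinates
`V(x,y,z) = (cos θ(z), -sin θ(z), 0)` with `θ(0) = 0` and `θ'` nowhere zero;
consequently `ker α` is diffeomorphic to the standard contact structure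
`ker (dz + x dy)`. -/
theorem stmt_19 (V : E3 → E3) (hV : ContDiff ℝ (⊤ : ℕ∞) V) (hfib : IsLineFibration V)
    (hcontact : ∀ p : E3, wedge V p ≠ 0)
    (hpar : ∀ p : E3, ∃ q : E3, line V q ≠ line V p ∧ (V q = V p ∨ V q = -V p)) :
    (∃ (A : E3 ≃ᵃ[ℝ] E3) (θ : ℝ → ℝ), ContDiff ℝ (⊤ : ℕ∞) θ ∧ θ 0 = 0 ∧
      (∀ z : ℝ, deriv θ z ≠ 0) ∧
      (∀ u v : E3, dot3 (A.linear u) (A.linear v) = dot3 u v) ∧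
      ∀ p : E3, V (A p) = A.linear (cos (θ p.2.2), -sin (θ p.2.2), (0 : ℝ))) ∧
    ∃ Φ : E3 ≃ₜ E3, ContDiff ℝ (⊤ : ℕ∞) (Φ : E3 → E3) ∧ ContDiff ℝ (⊤ : ℕ∞) (Φ.symm : E3 → E3) ∧
      ∃ f : E3 → ℝ, (∀ p, f p ≠ 0) ∧
        ∀ p u : E3,
          dot3 (V (Φ p)) (fderiv ℝ (Φ : E3 → E3) p u) = f p * (u.2.2 + p.1 * u.2.1) := by
  obtain ⟨A, θ, hθ, hθ0, hA, hVA⟩ := hfib.exists_isometry_apply_eq_cos_sin hV hcontact hpar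
  have hθ' (z : ℝ) : deriv θ z ≠ 0 := fun hz =>
    hcontact _ (wedge_eq_zero_of_fderiv_eq_zero
      (fderiv_eq_zero_of_deriv_eq_zero (hθ.differentiable (by simp)) hVA hz))
  obtain ⟨Φ, hΦ, hΦ_symm, hpull⟩ := exists_contactomorphism hθ hθ' hA hVA
  exact ⟨⟨A.toAffineEquiv, θ, hθ, hθ0, hθ', hA, hVA⟩, Φ, hΦ, hΦ_symm, fun _ => 1,
    fun _ => one_ne_zero, fun p u => by rw [hpull, one_mul]⟩
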